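/- Let σ > 1 and let f: ℝ → ℝ be 1-periodic and α-Hölder continuous for some 0 < α ≤ 1. Then there exist constants B, B* > 0 depending only on σ, f, α such that for every positive integer i: (1) for all positive integers k, | f(0)/(π^σ W_{i,k}^σ) · f(w_+*(i)φ^{−k})/sin(π w_+*(i) φ^{−k})^σ − f(0)² 5^{σ/2}/(π^{2σ} η_i^σ) | ≤ B / (φ^{αk} i^σ); and (2) for all positive integers j, | f(w_+(i)φ^{−(μ_i+j)})/sin(π w_+(i) φ^{−(μ_i+j)})^σ · f(0)/(π^σ (W*_{i,μ_i+j})^σ) − f(0)² 5^{σ/2}/(π^{2σ} η_i^σ) | ≤ B* / (φ^{α(μ_i+j)} i^{σ−α}). -/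

import Mathlib

open Real

noncomputable def phi : ℝ := (1 + Real.sqrt 5) / 2

noncomputable def W (i : ℕ) : ℕ → ℤ
  | 0 => ⌊phi ^ 2 * (⌊phi * i⌋ : ℝ)⌋ - ⌊phi * (⌊phi * i⌋ : ℝ)⌋
  | 1 => ⌊phi * (⌊phi * i⌋ : ℝ)⌋
  | 2 => ⌊phi ^ 2 * (⌊phi * i⌋ : ℝ)⌋
  | (k + 3) => W i (k + 2) + W i (k + 1)

noncomputable def wplus (i : ℕ) : ℝ := phi⁻¹ ^ 2 * (W i 1 : ℝ) + phi⁻¹ * (W i 2 : ℝ)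

noncomputable def wminus (i : ℕ) : ℝ := phi ^ 2 * (W i 1 : ℝ) - phi * (W i 2 : ℝ)

noncomputable def eta (i : ℕ) : ℝ := -(wplus i * wminus i)


noncomputable def mu (i : ℕ) : ℕ := sInf {m : ℕ | 0 < m ∧ 2 * W i 1 < (Nat.fib (m + 2) : ℤ)}

noncomputable def Wstar (i n k : ℕ) : ℤ :=
  (-1) ^ k * ((Nat.fib (n - 1) : ℤ) * W i k - (Nat.fib n : ℤ) * W i (k - 1))

/-!
Put `w₊ = wplus i`, `w = -wminus i`, so that `η = w * w₊`. Binet's formula reads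
`√5 * W i k = w₊ φ ^ k + w ψ ^ k`, and `√5 * Wstar` at index `n` is the same expression with `w` and
`w₊` exchanged. Since `ψ = -φ⁻¹`, for `θ = w φ ^ (-k)` the product `√5 * W i k * θ` equals `η` up to
the relative error `θ * φ ^ (-k) / w₊ ≤ θ`, and symmetrically in the starred case. As
`sin (π θ) = π θ (1 + O(θ))` for `θ` bounded away from `1`, raising to the power `-σ` preserves
the relative error `O(θ)`, while the Hölder condition replaces `f θ` by `f 0` at cost `O(θ ^ α)`.
The powers of `i` then come from `1 / 3 ≤ w ≤ 1` and from `w₊` and `η` being comparable to `i`.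
-/

open scoped goldenRatio

section RealInequalities

lemma mul_one_sub_le_sin_pi_mul {x : ℝ} (hx0 : 0 ≤ x) (hx1 : x ≤ 1) :
    π * x * (1 - x) ≤ sin (π * x) := by
  wlog hx : x ≤ 1 / 2 generalizing x
  · have h := this (x := 1 - x) (by linarith) (by linarith) (by linarith)
    rw [show π * (1 - x) = π - π * x by ring, sin_pi_sub] at h
    linarith
  have hπ3 : 3 < π := pi_gt_three
  have hπ4 : π < 3.15 := pi_lt_d2
  rcases le_total x (3 / 10) with hx3 | hx3
  · rcases hx0.eq_or_lt with rfl | hx0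
    · simp
    have hcubic : (π * x) ^ 3 / 6 ≤ π * x * x := by
      have : π ^ 2 * x ≤ 6 := by nlinarith
      nlinarith [mul_le_mul_of_nonneg_left this (by positivity : 0 ≤ π * x * x)]
    linarith [sin_gt_sub_cube (mul_pos pi_pos hx0)]
  · have hcos : 1 - (π / 2 - π * x) ^ 2 / 2 ≤ sin (π * x) := by
      rw [← cos_pi_div_two_sub]
      exact one_sub_sq_div_two_le_cos
    refine le_trans ?_ hcos
    have hy : (1 / 2 - x) ^ 2 ≤ 1 / 25 := by nlinarith
    nlinarith [mul_le_mul_of_nonneg_left hy (by nlinarith : 0 ≤ π ^ 2 / 2 - π)]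

lemma abs_sin_pi_mul_div_sub_one_le {x : ℝ} (hx0 : 0 < x) (hx1 : x ≤ 1) :
    |sin (π * x) / (π * x) - 1| ≤ x := by
  have hπx : 0 < π * x := by positivity
  have hlower : 1 - x ≤ sin (π * x) / (π * x) := by
    rw [le_div_iff₀ hπx]
    linarith [mul_one_sub_le_sin_pi_mul hx0.le hx1]
  have hupper : sin (π * x) / (π * x) ≤ 1 := (div_le_one hπx).2 (sin_le hπx.le)
  rw [abs_le]
  constructor <;> linarith

lemma abs_mul_sub_one_le_two_mul {t s θ : ℝ} (hs : |s| ≤ 1) (ht1 : |t - 1| ≤ θ)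
    (hs1 : |s - 1| ≤ θ) : |t * s - 1| ≤ 2 * θ := by
  calc |t * s - 1| = |(t - 1) * s + (s - 1)| := by ring_nf
    _ ≤ |t - 1| * |s| + |s - 1| := by simpa only [abs_mul] using abs_add_le ((t - 1) * s) (s - 1)
    _ ≤ θ * 1 + θ := by gcongr; exact (abs_nonneg _).trans ht1
    _ = 2 * θ := by ring

lemma exists_lipschitzOnWith_rpow_Icc (s : ℝ) {a : ℝ} (ha : 0 < a) (b : ℝ) :
    ∃ K, LipschitzOnWith K (fun x : ℝ ↦ x ^ s) (Set.Icc a b) := by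
  refine ContDiffOn.exists_lipschitzOnWith (n := 1) (fun x hx ↦ ?_) one_ne_zero (convex_Icc a b)
    isCompact_Icc
  exact (contDiffAt_rpow_const_of_ne (ha.trans_le hx.1).ne').contDiffWithinAt

lemma rpow_le_rpow_abs_mul_rpow (s : ℝ) {c x y : ℝ} (hc : 0 < c) (hy : 0 < y)
    (hyx : y / c ≤ x) (hxy : x ≤ c * y) : x ^ s ≤ c ^ |s| * y ^ s := by
  have hyc : 0 < y / c := div_pos hy hc
  rcases le_total 0 s with hs | hs
  · rw [abs_of_nonneg hs, ← mul_rpow hc.le hy.le]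
    exact rpow_le_rpow (hyc.le.trans hyx) hxy hs
  · rw [abs_of_nonpos hs, rpow_neg hc.le, inv_mul_eq_div, ← div_rpow hy.le hc.le]
    exact rpow_le_rpow_of_nonpos hyc hyx hs

end RealInequalities

section LocalEstimate

lemma div_rpow_mul_div_rpow_eq (σ a b : ℝ) {V S η : ℝ} (hV : 0 < V) (hS : 0 < S) (hη : 0 < η) :
    a / (π ^ σ * V ^ σ) * (b / S ^ σ) =
      a * b * ((5 : ℝ) ^ (σ / 2) / (π ^ (2 * σ) * η ^ σ)) * (√5 * V * S / (π * η)) ^ (-σ) := by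
  have hsqrt : (√5 : ℝ) ^ σ = 5 ^ (σ / 2) := by
    rw [sqrt_eq_rpow, ← rpow_mul (by norm_num)]
    ring_nf
  have hpi : π ^ (2 * σ) = π ^ σ * π ^ σ := by rw [two_mul, rpow_add pi_pos]
  rw [rpow_neg (by positivity), div_rpow (by positivity) (by positivity),
    mul_rpow (by positivity) hS.le, mul_rpow (by positivity) hV.le,
    mul_rpow pi_pos.le hη.le, hsqrt, hpi]
  field_simp

variable {α : ℝ} {f : ℝ → ℝ}

lemma exists_abs_mul_rpow_sub_le (σ : ℝ) (hα1 : α ≤ 1)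
    (hf : ∃ L : ℝ, ∀ x ∈ Set.Ioo (0 : ℝ) 1, |f x - f 0| ≤ L * x ^ α) :
    ∃ C : ℝ, 0 < C ∧ ∀ θ r : ℝ, 0 < θ → θ < 1 → r ∈ Set.Icc (1 / 9) 2 → |r - 1| ≤ 2 * θ →
      |f θ * r ^ (-σ) - f 0| ≤ C * θ ^ α := by
  obtain ⟨L, hL⟩ := hf
  obtain ⟨K, hK⟩ := exists_lipschitzOnWith_rpow_Icc (-σ) (by norm_num : (0 : ℝ) < 1 / 9) 2
  refine ⟨|L| * (1 + K * 2) + |f 0| * (K * 2) + 1, by positivity, fun θ r hθ0 hθ1 hr hrθ ↦ ?_⟩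
  have hrpow : |r ^ (-σ) - 1| ≤ K * (2 * θ) := by
    have h := hK.dist_le_mul r hr 1 (by norm_num)
    simp only [dist_eq, one_rpow] at h
    exact h.trans (by gcongr)
  have hrpow_le : |r ^ (-σ)| ≤ 1 + K * 2 := by
    calc |r ^ (-σ)| = |1 + (r ^ (-σ) - 1)| := by ring_nf
      _ ≤ 1 + |r ^ (-σ) - 1| := by simpa only [abs_one] using abs_add_le 1 (r ^ (-σ) - 1)
      _ ≤ 1 + K * (2 * 1) := by grw [hrpow, hθ1.le]
      _ = 1 + K * 2 := by ring
  have hθα : θ ≤ θ ^ α := by simpa using rpow_le_rpow_of_exponent_ge hθ0 hθ1.le hα1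
  have hfθ : |f θ - f 0| ≤ |L| * θ ^ α :=
    (hL θ ⟨hθ0, hθ1⟩).trans (by gcongr; exact le_abs_self L)
  calc |f θ * r ^ (-σ) - f 0| = |(f θ - f 0) * r ^ (-σ) + f 0 * (r ^ (-σ) - 1)| := by ring_nf
    _ ≤ |f θ - f 0| * |r ^ (-σ)| + |f 0| * |r ^ (-σ) - 1| := by
      simpa only [abs_mul] using abs_add_le ((f θ - f 0) * r ^ (-σ)) (f 0 * (r ^ (-σ) - 1))
    _ ≤ |L| * θ ^ α * (1 + K * 2) + |f 0| * (K * (2 * θ ^ α)) := by gcongr; grw [hrpow, hθα]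
    _ ≤ (|L| * (1 + K * 2) + |f 0| * (K * 2) + 1) * θ ^ α := by
      linarith [rpow_nonneg hθ0.le α]

lemma exists_abs_sub_le_of_abs_ratio_sub_one_le (σ : ℝ) (hα1 : α ≤ 1)
    (hf : ∃ L : ℝ, ∀ x ∈ Set.Ioo (0 : ℝ) 1, |f x - f 0| ≤ L * x ^ α) :
    ∃ C : ℝ, 0 < C ∧ ∀ V θ η : ℝ, 0 < η → 0 < θ → θ ≤ 2 / 3 → |√5 * V * θ / η - 1| ≤ θ →
      |f 0 / (π ^ σ * V ^ σ) * (f θ / sin (π * θ) ^ σ)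
        - f 0 ^ 2 * (5 : ℝ) ^ (σ / 2) / (π ^ (2 * σ) * η ^ σ)| ≤ C * (θ ^ α * η ^ (-σ)) := by
  obtain ⟨C, hC, hbound⟩ := exists_abs_mul_rpow_sub_le σ hα1 hf
  refine ⟨|f 0| * C * ((5 : ℝ) ^ (σ / 2) / π ^ (2 * σ)) + 1, by positivity,
    fun V θ η hη hθ0 hθ hVη ↦ ?_⟩
  have hsinc := abs_sin_pi_mul_div_sub_one_le hθ0 (by linarith)
  have hsinc_le : sin (π * θ) / (π * θ) ≤ 1 :=
    (div_le_one (by positivity)).2 (sin_le (by positivity))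
  set t := √5 * V * θ / η with ht
  set s := sin (π * θ) / (π * θ) with hs
  have ht3 : 1 / 3 ≤ t := by linarith [(abs_le.1 hVη).1]
  have hs3 : 1 / 3 ≤ s := by linarith [(abs_le.1 hsinc).1]
  have hV : 0 < V := by
    by_contra! hV
    have : t ≤ 0 := div_nonpos_of_nonpos_of_nonneg
      (mul_nonpos_of_nonpos_of_nonneg (mul_nonpos_of_nonneg_of_nonpos (by positivity) hV) hθ0.le)
      hη.le
    linarith
  have hsin : 0 < sin (π * θ) := sin_pos_of_pos_of_lt_pi (by positivity) (by nlinarith [pi_pos])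
  have hr : |t * s - 1| ≤ 2 * θ :=
    abs_mul_sub_one_le_two_mul (abs_le.2 ⟨by linarith, hsinc_le⟩) hVη hsinc
  have hr_mem : t * s ∈ Set.Icc (1 / 9) 2 := by
    have := (abs_le.1 hVη).2
    constructor <;> nlinarith
  have hts : √5 * V * sin (π * θ) / (π * η) = t * s := by rw [ht, hs]; field_simp
  rw [div_rpow_mul_div_rpow_eq σ (f 0) (f θ) hV hsin hη, hts]
  set c := (5 : ℝ) ^ (σ / 2) / (π ^ (2 * σ) * η ^ σ) with hc
  have hc0 : 0 < c := by positivity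
  calc |f 0 * f θ * c * (t * s) ^ (-σ) - f 0 ^ 2 * 5 ^ (σ / 2) / (π ^ (2 * σ) * η ^ σ)|
      = |f 0 * (f θ * (t * s) ^ (-σ) - f 0) * c| := by rw [hc]; congr 1; ring
    _ = |f 0| * |f θ * (t * s) ^ (-σ) - f 0| * c := by rw [abs_mul, abs_mul, abs_of_pos hc0]
    _ ≤ |f 0| * (C * θ ^ α) * c := by
      gcongr
      exact hbound θ _ hθ0 (by linarith) hr_mem hr
    _ = |f 0| * C * (5 ^ (σ / 2) / π ^ (2 * σ)) * (θ ^ α * η ^ (-σ)) := by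
      rw [hc, rpow_neg hη.le]
      field_simp
    _ ≤ _ := by gcongr; linarith

-- `hV` is the common shape of Binet's formula for `W` and for `Wstar`: `x` is a negative power of
-- `φ`, `ε = ±1`, and the two weights are `-wminus i` and `wplus i` in either order.
lemma abs_ratio_sub_one_le {w w' x V ε : ℝ} (hw : 0 < w) (hx : 0 < x) (hxw' : x ≤ w')
    (hε : |ε| ≤ 1) (hV : √5 * V = w' / x + ε * (w * x)) :
    |√5 * V * (w * x) / (w * w') - 1| ≤ w * x := by
  have hw' : 0 < w' := hx.trans_le hxw'
  have herror : √5 * V * (w * x) / (w * w') - 1 = ε * (w * x) * (x / w') := by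
    rw [hV]
    field_simp
    ring
  rw [herror, abs_mul, abs_mul, abs_of_pos (mul_pos hw hx), abs_of_pos (div_pos hx hw')]
  calc |ε| * (w * x) * (x / w') ≤ 1 * (w * x) * 1 := by
        gcongr
        exact (div_le_one hw').2 hxw'
    _ = w * x := by ring

end LocalEstimate

section Wythoff

lemma phi_eq_goldenRatio : phi = φ := rfl

lemma three_halves_lt_goldenRatio : 3 / 2 < φ := by
  have : 2 < √5 := lt_sqrt_of_sq_lt (by norm_num)
  unfold goldenRatio
  linarith

lemma inv_goldenRatio_le_two_thirds : φ⁻¹ ≤ 2 / 3 := by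
  rw [inv_le_comm₀ goldenRatio_pos (by norm_num)]
  linarith [three_halves_lt_goldenRatio]

lemma goldenConj_pow_eq (n : ℕ) : ψ ^ n = (-1) ^ n * (φ ^ n)⁻¹ := by
  rw [← inv_pow, ← mul_pow, inv_goldenRatio, neg_one_mul, neg_neg]

lemma sqrt_five_mul_fib (n : ℕ) : √5 * (Nat.fib n : ℝ) = φ ^ n - ψ ^ n := by
  rw [coe_fib_eq]
  field_simp

lemma sqrt_five_mul_eq_of_fib_rec {u : ℕ → ℝ} (hu : ∀ n, u (n + 2) = u (n + 1) + u n) (n : ℕ) :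
    √5 * u n = (u 1 - ψ * u 0) * φ ^ n - (u 1 - φ * u 0) * ψ ^ n := by
  rw [← goldenRatio_sub_goldenConj]
  induction n using Nat.twoStepInduction with
  | zero => ring
  | one => ring
  | more n ih ih' =>
    rw [hu, mul_add, ih, ih', pow_add φ n 2, pow_add ψ n 2, goldenRatio_sq, goldenConj_sq]
    ring

lemma W_add_two (i k : ℕ) : W i (k + 2) = W i (k + 1) + W i k := by
  cases k <;> simp [W]

lemma wplus_eq (i : ℕ) : wplus i = W i 1 - ψ * W i 0 := by
  rw [wplus, phi_eq_goldenRatio, W_add_two, inv_goldenRatio]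
  push_cast
  linear_combination (W i 1 : ℝ) * goldenConj_sq

lemma wminus_eq (i : ℕ) : wminus i = W i 1 - φ * W i 0 := by
  rw [wminus, phi_eq_goldenRatio, W_add_two]
  push_cast
  linear_combination (W i 1 : ℝ) * goldenRatio_sq

lemma eta_eq (i : ℕ) : eta i = -wminus i * wplus i := by rw [eta]; ring

lemma sqrt_five_mul_W (i k : ℕ) :
    √5 * W i k = wplus i / (φ ^ k)⁻¹ + (-1) ^ k * (-wminus i * (φ ^ k)⁻¹) := by
  rw [sqrt_five_mul_eq_of_fib_rec (u := fun k ↦ (W i k : ℝ)) (fun k ↦ mod_cast W_add_two i k),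
    ← wplus_eq, ← wminus_eq, goldenConj_pow_eq, div_inv_eq_mul]
  ring

lemma sqrt_five_mul_Wstar (i n : ℕ) :
    √5 * Wstar i (n + 1) 1 = -wminus i / (φ ^ n)⁻¹ + (-1) ^ n * (wplus i * (φ ^ n)⁻¹) := by
  have hn := sqrt_five_mul_fib n
  have hn1 := sqrt_five_mul_fib (n + 1)
  have hψ := goldenConj_pow_eq n
  rw [Wstar, wplus_eq, wminus_eq, div_inv_eq_mul]
  simp only [Nat.add_sub_cancel, Nat.sub_self, pow_one]
  push_cast
  linear_combination (W i 0 : ℝ) * hn1 - (W i 1 : ℝ) * hn + (W i 1 - ψ * W i 0 : ℝ) * hψ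

lemma W_zero (i : ℕ) : W i 0 = ⌊φ * i⌋ := by
  simp only [W, phi_eq_goldenRatio, goldenRatio_sq, add_one_mul, Int.floor_add_intCast]
  ring

lemma fract_goldenRatio_mul_pos {i : ℕ} (hi : 0 < i) : 0 < Int.fract (φ * i) := by
  rw [Int.fract_pos]
  exact (goldenRatio_irrational.mul_natCast hi.ne').ne_int _

-- `φ * ⌊φ * i⌋ = ⌊φ * i⌋ + i - φ⁻¹ * fract (φ * i)`, whose last term
-- lies strictly between `0` and `1`.
lemma W_one {i : ℕ} (hi : 0 < i) : W i 1 = W i 0 + i - 1 := by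
  have hfract := fract_goldenRatio_mul_pos hi
  have hfract1 := Int.fract_lt_one (φ * i)
  have hsq := goldenRatio_sq
  have hφ1 := one_lt_goldenRatio
  have hφ2 := goldenRatio_lt_two
  rw [W_zero, W, phi_eq_goldenRatio, Int.floor_eq_iff]
  rw [← Int.self_sub_floor] at hfract hfract1
  push_cast
  constructor <;> nlinarith

lemma neg_wminus_eq {i : ℕ} (hi : 0 < i) : -wminus i = 1 - φ⁻¹ * Int.fract (φ * i) := by
  rw [wminus_eq, W_one hi, W_zero, inv_goldenRatio, ← one_sub_goldenConj, ← Int.self_sub_floor]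
  push_cast
  linear_combination (i : ℝ) * goldenRatio_sq

lemma inv_goldenRatio_sq_lt_neg_wminus {i : ℕ} (hi : 0 < i) : (φ ^ 2)⁻¹ < -wminus i := by
  have hinv : (φ ^ 2)⁻¹ = 1 - φ⁻¹ := by
    rw [← inv_pow, inv_goldenRatio]
    linear_combination goldenConj_sq
  rw [neg_wminus_eq hi, hinv]
  gcongr
  exact mul_lt_of_lt_one_right (inv_pos.2 goldenRatio_pos) (Int.fract_lt_one _)

lemma neg_wminus_le_one {i : ℕ} (hi : 0 < i) : -wminus i ≤ 1 := by
  rw [neg_wminus_eq hi]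
  have := mul_nonneg (inv_pos.2 goldenRatio_pos).le (Int.fract_nonneg (φ * i))
  linarith

lemma one_third_le_neg_wminus {i : ℕ} (hi : 0 < i) : 1 / 3 ≤ -wminus i := by
  refine le_trans ?_ (inv_goldenRatio_sq_lt_neg_wminus hi).le
  rw [goldenRatio_sq, inv_eq_one_div]
  gcongr
  linarith [goldenRatio_lt_two]

lemma wplus_eq_goldenRatio_mul_add {i : ℕ} (hi : 0 < i) : wplus i = φ * W i 0 + i - 1 := by
  rw [wplus_eq, W_one hi, ← one_sub_goldenConj]
  push_cast
  ring

lemma natCast_le_wplus {i : ℕ} (hi : 0 < i) : (i : ℝ) ≤ wplus i := by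
  have hi1 : (1 : ℝ) ≤ i := mod_cast hi
  have hW : (1 : ℝ) ≤ W i 0 := by
    rw [W_zero]
    exact_mod_cast Int.le_floor.2 (by push_cast; nlinarith [one_lt_goldenRatio])
  rw [wplus_eq_goldenRatio_mul_add hi]
  nlinarith [one_lt_goldenRatio]

lemma wplus_le_four_mul {i : ℕ} (hi : 0 < i) : wplus i ≤ 4 * i := by
  have hW : (W i 0 : ℝ) ≤ φ * i := by
    rw [W_zero]
    exact Int.floor_le _
  calc wplus i = φ * W i 0 + i - 1 := wplus_eq_goldenRatio_mul_add hi
    _ ≤ φ * (φ * i) + i := by grw [hW]; linarith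
    _ = (φ + 2) * i := by linear_combination (i : ℝ) * goldenRatio_sq
    _ ≤ 4 * i := by grw [goldenRatio_lt_two]; norm_num

lemma mu_spec (i : ℕ) : 0 < mu i ∧ 2 * W i 1 < (Nat.fib (mu i + 2) : ℤ) := by
  have hne : {m : ℕ | 0 < m ∧ 2 * W i 1 < (Nat.fib (m + 2) : ℤ)}.Nonempty := by
    refine ⟨(2 * W i 1).toNat + 5, by lia, ?_⟩
    have := Nat.le_fib_self (n := (2 * W i 1).toNat + 5 + 2) (by lia)
    lia
  exact Nat.sInf_mem hne

lemma wplus_mul_inv_pow_le_half {i n : ℕ} (hi : 0 < i) (hn : mu i < n) :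
    wplus i * (φ ^ n)⁻¹ ≤ 1 / 2 := by
  have hfib : 2 * (W i 1 : ℝ) + 1 ≤ Nat.fib (n + 1) := by
    have hmono : Nat.fib (mu i + 2) ≤ Nat.fib (n + 1) := Nat.fib_mono (by lia)
    have hmu := (mu_spec i).2
    have : 2 * W i 1 + 1 ≤ (Nat.fib (n + 1) : ℤ) := by lia
    exact_mod_cast this
  have hW : √5 * W i 1 = wplus i * φ - wminus i * ψ := by
    rw [wplus_eq, wminus_eq, ← goldenRatio_sub_goldenConj]
    ring
  have hψ : |ψ ^ (n + 1)| ≤ 1 := by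
    rw [abs_pow]
    exact pow_le_one₀ (abs_nonneg _)
      (abs_le.2 ⟨neg_one_lt_goldenConj.le, by linarith [goldenConj_neg]⟩)
  have hwψ : ψ ≤ -wminus i * ψ := by
    nlinarith [neg_wminus_le_one hi, goldenConj_neg]
  have hupper : 2 * (wplus i * φ) ≤ φ ^ n * φ := by
    have h := mul_le_mul_of_nonneg_left hfib (sqrt_nonneg 5)
    rw [sqrt_five_mul_fib, pow_succ φ] at h
    linarith [(abs_le.1 hψ).1, goldenRatio_sub_goldenConj, goldenRatio_add_goldenConj]
  have hle : 2 * wplus i ≤ φ ^ n := le_of_mul_le_mul_right (by linarith) goldenRatio_pos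
  rw [← div_eq_mul_inv, div_le_iff₀ (pow_pos goldenRatio_pos n)]
  linarith

lemma div_four_le_eta {i : ℕ} (hi : 0 < i) : (i : ℝ) / 4 ≤ eta i := by
  calc (i : ℝ) / 4 ≤ 1 / 3 * i := by linarith [i.cast_nonneg (α := ℝ)]
    _ ≤ -wminus i * wplus i :=
      mul_le_mul (one_third_le_neg_wminus hi) (natCast_le_wplus hi) i.cast_nonneg
        (by linarith [one_third_le_neg_wminus hi])
    _ = eta i := (eta_eq i).symm

lemma eta_le_four_mul {i : ℕ} (hi : 0 < i) : eta i ≤ 4 * i := by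
  rw [eta_eq]
  calc -wminus i * wplus i ≤ 1 * (4 * i) :=
      mul_le_mul (neg_wminus_le_one hi) (wplus_le_four_mul hi)
        (i.cast_nonneg.trans (natCast_le_wplus hi)) zero_le_one
    _ = 4 * i := one_mul _

lemma neg_wminus_mul_inv_pow_le_two_thirds {i k : ℕ} (hi : 0 < i) (hk : 0 < k) :
    -wminus i * (φ ^ k)⁻¹ ≤ 2 / 3 := by
  have hφk : φ ≤ φ ^ k := le_self_pow₀ one_lt_goldenRatio.le hk.ne'
  calc -wminus i * (φ ^ k)⁻¹ ≤ 1 * φ⁻¹ :=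
      mul_le_mul (neg_wminus_le_one hi) (inv_anti₀ goldenRatio_pos hφk)
        (inv_pos.2 (pow_pos goldenRatio_pos k)).le zero_le_one
    _ ≤ 2 / 3 := by simpa only [one_mul] using inv_goldenRatio_le_two_thirds

lemma abs_sqrt_five_mul_W_mul_div_eta_sub_one_le {i : ℕ} (hi : 0 < i) (k : ℕ) :
    |√5 * W i k * (-wminus i * (φ ^ k)⁻¹) / eta i - 1| ≤ -wminus i * (φ ^ k)⁻¹ := by
  have hx : (φ ^ k)⁻¹ ≤ wplus i := by
    calc (φ ^ k)⁻¹ ≤ 1 := inv_le_one_of_one_le₀ (one_le_pow₀ one_lt_goldenRatio.le)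
      _ ≤ i := mod_cast hi
      _ ≤ wplus i := natCast_le_wplus hi
  rw [eta_eq]
  exact abs_ratio_sub_one_le (by linarith [one_third_le_neg_wminus hi])
    (inv_pos.2 (pow_pos goldenRatio_pos k)) hx (abs_neg_one_pow k).le (sqrt_five_mul_W i k)

lemma abs_sqrt_five_mul_Wstar_mul_div_eta_sub_one_le {i n : ℕ} (hi : 0 < i) (hn : 2 ≤ n) :
    |√5 * Wstar i (n + 1) 1 * (wplus i * (φ ^ n)⁻¹) / eta i - 1| ≤ wplus i * (φ ^ n)⁻¹ := by
  have hx : (φ ^ n)⁻¹ ≤ -wminus i := by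
    refine le_trans ?_ (inv_goldenRatio_sq_lt_neg_wminus hi).le
    gcongr
    exact one_lt_goldenRatio.le
  have hw : 0 < wplus i := (Nat.cast_pos.2 hi).trans_le (natCast_le_wplus hi)
  rw [eta_eq, mul_comm (-wminus i)]
  exact abs_ratio_sub_one_le hw (inv_pos.2 (pow_pos goldenRatio_pos n)) hx
    (abs_neg_one_pow n).le (sqrt_five_mul_Wstar i n)

end Wythoff

section Decay

lemma phi_rpow_neg_natCast (n : ℕ) : phi ^ (-(n : ℝ)) = (φ ^ n)⁻¹ := by
  rw [phi_eq_goldenRatio, rpow_neg goldenRatio_pos.le, rpow_natCast]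

lemma rpow_mul_eta_rpow_neg_le (σ α : ℝ) {i : ℕ} (hi : 0 < i) {w y : ℝ} (hy : 0 < y)
    (hyw : y / 4 ≤ w) (hwy : w ≤ 4 * y) (n : ℕ) :
    (w * (φ ^ n)⁻¹) ^ α * eta i ^ (-σ) ≤
      4 ^ |α| * 4 ^ |σ| * (y ^ α / (phi ^ (α * n) * (i : ℝ) ^ σ)) := by
  have hi0 : (0 : ℝ) < i := mod_cast hi
  have hφn : 0 < φ ^ n := pow_pos goldenRatio_pos n
  have hw : 0 ≤ w := by linarith
  have hpow : ((φ ^ n)⁻¹) ^ α = (phi ^ (α * n))⁻¹ := by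
    rw [phi_eq_goldenRatio, inv_rpow hφn.le, mul_comm, rpow_mul goldenRatio_pos.le, rpow_natCast]
  have hη : eta i ^ (-σ) ≤ 4 ^ |σ| * (i : ℝ) ^ (-σ) := by
    simpa only [abs_neg] using rpow_le_rpow_abs_mul_rpow (-σ) (by norm_num : (0 : ℝ) < 4) hi0
      (div_four_le_eta hi) (eta_le_four_mul hi)
  have hη0 : 0 ≤ eta i := (div_nonneg hi0.le (by norm_num)).trans (div_four_le_eta hi)
  have hphi : 0 < phi := goldenRatio_pos
  calc (w * (φ ^ n)⁻¹) ^ α * eta i ^ (-σ)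
      = w ^ α * (phi ^ (α * n))⁻¹ * eta i ^ (-σ) := by
        rw [mul_rpow hw (inv_pos.2 hφn).le, hpow]
    _ ≤ (4 ^ |α| * y ^ α) * (phi ^ (α * n))⁻¹ * (4 ^ |σ| * (i : ℝ) ^ (-σ)) := by
        gcongr
        exact rpow_le_rpow_abs_mul_rpow α (by norm_num) hy hyw hwy
    _ = 4 ^ |α| * 4 ^ |σ| * (y ^ α / (phi ^ (α * n) * (i : ℝ) ^ σ)) := by
        rw [rpow_neg hi0.le]
        field_simp

theorem exponential_decay_general
    (σ α : ℝ) (hα1 : α ≤ 1) (f : ℝ → ℝ)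
    (hf : ∃ L : ℝ, ∀ x ∈ Set.Ioo (0 : ℝ) 1, |f x - f 0| ≤ L * x ^ α) :
    ∃ B Bstar : ℝ, 0 < B ∧ 0 < Bstar ∧
      ∀ i : ℕ, 0 < i →
        (∀ k : ℕ, 0 < k →
          |f 0 / (π ^ σ * (W i k : ℝ) ^ σ) *
              (f (-wminus i * phi ^ (-(k : ℝ))) /
                Real.sin (π * -wminus i * phi ^ (-(k : ℝ))) ^ σ)
            - f 0 ^ 2 * (5 : ℝ) ^ (σ / 2) / (π ^ (2 * σ) * eta i ^ σ)|
            ≤ B / (phi ^ (α * (k : ℝ)) * (i : ℝ) ^ σ)) ∧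
        (∀ j : ℕ, 0 < j →
          |f (wplus i * phi ^ (-((mu i + j : ℕ) : ℝ))) /
                Real.sin (π * wplus i * phi ^ (-((mu i + j : ℕ) : ℝ))) ^ σ *
              (f 0 / (π ^ σ * (Wstar i (mu i + j + 1) 1 : ℝ) ^ σ))
            - f 0 ^ 2 * (5 : ℝ) ^ (σ / 2) / (π ^ (2 * σ) * eta i ^ σ)|
            ≤ Bstar / (phi ^ (α * ((mu i + j : ℕ) : ℝ)) * (i : ℝ) ^ (σ - α))) := by
  obtain ⟨C, hC, hbound⟩ := exists_abs_sub_le_of_abs_ratio_sub_one_le σ hα1 hf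
  refine ⟨C * (4 ^ |α| * 4 ^ |σ|), C * (4 ^ |α| * 4 ^ |σ|), by positivity, by positivity,
    fun i hi ↦ ?_⟩
  have hi0 : (0 : ℝ) < i := mod_cast hi
  have hwm : 1 / 3 ≤ -wminus i := one_third_le_neg_wminus hi
  have hwp : (i : ℝ) ≤ wplus i := natCast_le_wplus hi
  have hη : 0 < eta i := (div_pos hi0 (by norm_num)).trans_le (div_four_le_eta hi)
  have hφ (n : ℕ) : 0 < (φ ^ n)⁻¹ := inv_pos.2 (pow_pos goldenRatio_pos n)
  refine ⟨fun k hk ↦ ?_, fun j hj ↦ ?_⟩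
  · have hdecay := rpow_mul_eta_rpow_neg_le σ α hi one_pos (by linarith)
      (by linarith [neg_wminus_le_one hi] : -wminus i ≤ 4 * 1) k
    rw [one_rpow] at hdecay
    rw [phi_rpow_neg_natCast, mul_assoc π]
    calc _ ≤ C * ((-wminus i * (φ ^ k)⁻¹) ^ α * eta i ^ (-σ)) :=
          hbound _ _ _ hη (mul_pos (by linarith) (hφ k))
            (neg_wminus_mul_inv_pow_le_two_thirds hi hk)
            (abs_sqrt_five_mul_W_mul_div_eta_sub_one_le hi k)
      _ ≤ _ := by grw [hdecay, ← mul_assoc, mul_one_div]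
  · have hn : mu i < mu i + j := by lia
    have hn2 : 2 ≤ mu i + j := by have := (mu_spec i).1; lia
    generalize mu i + j = n at hn hn2 ⊢
    have hdecay := rpow_mul_eta_rpow_neg_le σ α hi hi0 (by linarith) (wplus_le_four_mul hi) n
    rw [phi_rpow_neg_natCast, mul_assoc π, mul_comm (_ / _)]
    calc _ ≤ C * ((wplus i * (φ ^ n)⁻¹) ^ α * eta i ^ (-σ)) :=
          hbound _ _ _ hη (mul_pos (by linarith) (hφ n))
            (by linarith [wplus_mul_inv_pow_le_half hi hn])
            (abs_sqrt_five_mul_Wstar_mul_div_eta_sub_one_le hi hn2)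
      _ ≤ C * (4 ^ |α| * 4 ^ |σ| * ((i : ℝ) ^ α / (phi ^ (α * n) * (i : ℝ) ^ σ))) := by
          grw [hdecay]
      _ = _ := by
          rw [rpow_sub hi0]
          field_simp

end Decay

/-- Exponential decay of the approximation of the limit expressions by the
constant `f(0)² 5^{σ/2} / (π^{2σ} η_i^σ)`. -/
theorem exponential_decay
    (σ : ℝ) (hσ : 1 < σ) (f : ℝ → ℝ)
    (hper : ∀ t : ℝ, f (t + 1) = f t)
    (α : ℝ) (hα0 : 0 < α) (hα1 : α ≤ 1)
    (hHolder : ∃ L : ℝ, 0 ≤ L ∧ ∀ x ∈ Set.Ico (0 : ℝ) 1, ∀ y ∈ Set.Ico (0 : ℝ) 1,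
      |f x - f y| ≤ L * |x - y| ^ α) :
    ∃ B Bstar : ℝ, 0 < B ∧ 0 < Bstar ∧
      ∀ i : ℕ, 0 < i →
        (∀ k : ℕ, 0 < k →
          |f 0 / (π ^ σ * (W i k : ℝ) ^ σ) *
              (f (-wminus i * phi ^ (-(k : ℝ))) /
                Real.sin (π * -wminus i * phi ^ (-(k : ℝ))) ^ σ)
            - f 0 ^ 2 * (5 : ℝ) ^ (σ / 2) / (π ^ (2 * σ) * eta i ^ σ)|
            ≤ B / (phi ^ (α * (k : ℝ)) * (i : ℝ) ^ σ)) ∧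
        (∀ j : ℕ, 0 < j →
          |f (wplus i * phi ^ (-((mu i + j : ℕ) : ℝ))) /
                Real.sin (π * wplus i * phi ^ (-((mu i + j : ℕ) : ℝ))) ^ σ *
              (f 0 / (π ^ σ * (Wstar i (mu i + j + 1) 1 : ℝ) ^ σ))
            - f 0 ^ 2 * (5 : ℝ) ^ (σ / 2) / (π ^ (2 * σ) * eta i ^ σ)|
            ≤ Bstar / (phi ^ (α * ((mu i + j : ℕ) : ℝ)) * (i : ℝ) ^ (σ - α))) := by
  obtain ⟨L, -, hL⟩ := hHolder
  exact exponential_decay_general σ α hα1 f ⟨L, fun x hx ↦ by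
    simpa [abs_of_pos hx.1] using hL x ⟨hx.1.le, hx.2⟩ 0 (by simp)⟩
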